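/- Let R > 0 and a ≥ 0. Let ψ : ℝ³ → ℝ be continuous with ψ(x) > 0 for |x| ≥ R and ψ(x) → 0 as |x| → ∞, twice continuously differentiable on the open set {x ∈ ℝ³ : |x| > R}, and satisfying Δψ(x) ≤ a ψ(x) for all |x| > R. Then for every A₂ > a there exist constants c > 0 and R' ≥ R such that ψ(x) ≥ c e^{-√{A₂} |x|} for all x with |x| ≥ R'. -/

import Mathlib

/-!
The function `φ x = c * exp (-√A * ‖x‖)` on an `n`-dimensional space satisfies
`Δ φ = (A - (n - 1) * √A / ‖x‖) * φ`, which exceeds `a * φ` once `‖x‖` is large, because `a < A`.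
Choose `c` such that `φ ≤ ψ` on a large sphere. If `ψ < φ` somewhere outside that sphere, then
`ψ - φ`, which is asymptotically nonnegative, attains a negative minimum there. At the minimum
`0 ≤ Δ (ψ - φ)`, in contradiction to `Δ ψ ≤ a * ψ ≤ a * φ < Δ φ`.
-/

open MeasureTheory Filter Set

/-- The Laplacian `Δf = ∑_{j=1}^{3} ∂²f/∂x_j²` of a function on `ℝ³`. -/
noncomputable def laplacian (f : EuclideanSpace ℝ (Fin 3) → ℝ)
    (x : EuclideanSpace ℝ (Fin 3)) : ℝ :=
  ∑ i : Fin 3,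
    fderiv ℝ (fun y => fderiv ℝ f y (EuclideanSpace.single i 1)) x (EuclideanSpace.single i 1)

open Topology Module
open scoped Laplacian RealInnerProductSpace

section SecondDerivative

theorem deriv_deriv_nonneg_of_isLocalMin {f : ℝ → ℝ} {x : ℝ} (hmin : IsLocalMin f x)
    (hf : ContinuousAt f x) : 0 ≤ deriv (deriv f) x := by
  by_contra! hneg
  -- Otherwise `x` is also a local maximum, so `f` is locally constant.
  have hmax : IsLocalMax f x := isLocalMax_of_deriv_deriv_neg hneg hmin.deriv_eq_zero hf
  have hconst : f =ᶠ[𝓝 x] fun _ => f x := by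
    filter_upwards [hmin, hmax] with y hge hle using le_antisymm hle hge
  have hzero : deriv (deriv f) x = 0 := by
    simpa using hconst.deriv.deriv_eq
  exact hneg.ne hzero

section NormedSpace

variable {𝕜 E F : Type*} [NontriviallyNormedField 𝕜] [NormedAddCommGroup E] [NormedSpace 𝕜 E]
  [NormedAddCommGroup F] [NormedSpace 𝕜 F]

theorem differentiableAt_fderiv_of_contDiffAt_two {f : E → F} {x : E} (hf : ContDiffAt 𝕜 2 f x) :
    DifferentiableAt 𝕜 (fderiv 𝕜 f) x :=
  (hf.fderiv_right (m := 1) (by norm_num)).differentiableAt one_ne_zero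

theorem iteratedFDeriv_two_eq_fderiv_fderiv_apply {f : E → F} {x : E} (hf : ContDiffAt 𝕜 2 f x)
    (v w : E) : iteratedFDeriv 𝕜 2 f x ![v, w] = fderiv 𝕜 (fun y => fderiv 𝕜 f y w) x v := by
  simp [iteratedFDeriv_two_apply,
    fderiv_clm_apply (differentiableAt_fderiv_of_contDiffAt_two hf) (differentiableAt_const w)]

theorem deriv_deriv_comp_add_smul {f : E → F} {x : E} (hf : ContDiffAt 𝕜 2 f x) (v : E) :
    deriv (deriv fun t : 𝕜 => f (x + t • v)) 0 = iteratedFDeriv 𝕜 2 f x ![v, v] := by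
  have hline (t : 𝕜) : HasDerivAt (fun t : 𝕜 => x + t • v) v t := by
    simpa using ((hasDerivAt_id t).smul_const v).const_add x
  have hline₀ : Tendsto (fun t : 𝕜 => x + t • v) (𝓝 0) (𝓝 x) := by
    simpa using (hline 0).continuousAt.tendsto
  have hfirst : deriv (fun t : 𝕜 => f (x + t • v)) =ᶠ[𝓝 0]
      fun t => fderiv 𝕜 f (x + t • v) v := by
    filter_upwards [hline₀.eventually (hf.eventually (by simp))] with t ht
    exact ((ht.differentiableAt two_ne_zero).hasFDerivAt.comp_hasDerivAt t (hline t)).deriv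
  have hsecond : HasFDerivAt (fun y => fderiv 𝕜 f y v)
      (fderiv 𝕜 (fun y => fderiv 𝕜 f y v) x) (x + (0 : 𝕜) • v) := by
    simpa using ((differentiableAt_fderiv_of_contDiffAt_two hf).clm_apply
      (differentiableAt_const v)).hasFDerivAt
  rw [hfirst.deriv_eq, iteratedFDeriv_two_eq_fderiv_fderiv_apply hf]
  exact (hsecond.comp_hasDerivAt 0 (hline 0)).deriv

end NormedSpace

theorem iteratedFDeriv_two_nonneg_of_isLocalMin {E : Type*} [NormedAddCommGroup E]
    [NormedSpace ℝ E] {f : E → ℝ} {x : E} (hmin : IsLocalMin f x) (hf : ContDiffAt ℝ 2 f x)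
    (v : E) : 0 ≤ iteratedFDeriv ℝ 2 f x ![v, v] := by
  let line : ℝ → E := fun t => x + t • v
  have hline : ContinuousAt line 0 := by fun_prop
  have hline₀ : line 0 = x := by simp [line]
  rw [← deriv_deriv_comp_add_smul hf]
  rw [← hline₀] at hmin hf
  exact deriv_deriv_nonneg_of_isLocalMin (hmin.comp_continuous hline) (hf.continuousAt.comp hline)

end SecondDerivative

section Radial

variable {E : Type*} [NormedAddCommGroup E] [InnerProductSpace ℝ E] {g : ℝ → ℝ} {x : E}

theorem hasFDerivAt_norm_of_ne_zero (hx : x ≠ 0) :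
    HasFDerivAt (fun y : E => ‖y‖) (‖x‖⁻¹ • innerSL ℝ x) x := by
  have hsqrt : HasFDerivAt (fun y : E => √(‖y‖ ^ 2))
      ((1 / (2 * √(‖x‖ ^ 2))) • (2 • innerSL ℝ x)) x :=
    (hasStrictFDerivAt_norm_sq x).hasFDerivAt.sqrt (by simpa using hx)
  simp only [Real.sqrt_sq (norm_nonneg _)] at hsqrt
  convert hsqrt using 1
  ext v
  simp only [smul_apply, coe_innerSL_apply, smul_eq_mul, one_div, mul_inv_rev, nsmul_eq_mul,
    Nat.cast_ofNat]
  field_simp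

theorem fderiv_comp_norm_apply (hg : DifferentiableAt ℝ g ‖x‖) (hx : x ≠ 0) (v : E) :
    fderiv ℝ (fun y => g ‖y‖) x v = deriv g ‖x‖ * (‖x‖⁻¹ * ⟪x, v⟫) := by
  have h := (hg.hasDerivAt.comp_hasFDerivAt x (hasFDerivAt_norm_of_ne_zero hx)).fderiv
  simpa [Function.comp_def] using DFunLike.congr_fun h v

theorem iteratedFDeriv_two_comp_norm (hg : ContDiffAt ℝ 2 g ‖x‖) (hx : x ≠ 0) (v w : E) :
    iteratedFDeriv ℝ 2 (fun y => g ‖y‖) x ![v, w] =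
      deriv (deriv g) ‖x‖ * (⟪x, v⟫ * ⟪x, w⟫ / ‖x‖ ^ 2) +
        deriv g ‖x‖ * (⟪v, w⟫ / ‖x‖ - ⟪x, v⟫ * ⟪x, w⟫ / ‖x‖ ^ 3) := by
  have hr : ‖x‖ ≠ 0 := norm_ne_zero_iff.2 hx
  have hnorm := hasFDerivAt_norm_of_ne_zero hx
  have hgnorm : ContDiffAt ℝ 2 (fun y : E => g ‖y‖) x := hg.comp x (contDiffAt_norm ℝ hx)
  have hfirst : (fun y => fderiv ℝ (fun y => g ‖y‖) y w) =ᶠ[𝓝 x]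
      fun y => deriv g ‖y‖ * (‖y‖⁻¹ * ⟪y, w⟫) := by
    filter_upwards [continuous_norm.continuousAt.eventually (hg.eventually (by simp)),
      isOpen_ne.mem_nhds hx] with y hgy hy
    exact fderiv_comp_norm_apply (hgy.differentiableAt two_ne_zero) hy w
  have hg' : DifferentiableAt ℝ (deriv g) ‖x‖ := by
    simpa using (differentiableAt_fderiv_of_contDiffAt_two hg).clm_apply (differentiableAt_const 1)
  have hinner : HasFDerivAt (fun y : E => ⟪y, w⟫) (innerSL ℝ w) x := by
    simpa [real_inner_comm] using (innerSL ℝ w).hasFDerivAt (x := x)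
  have hsecond := (hg'.hasDerivAt.comp_hasFDerivAt x hnorm).mul
    (((hasDerivAt_inv hr).comp_hasFDerivAt x hnorm).mul hinner)
  rw [iteratedFDeriv_two_eq_fderiv_fderiv_apply hgnorm, hfirst.fderiv_eq]
  refine (DFunLike.congr_fun hsecond.fderiv v).trans ?_
  simp only [Function.comp_apply, Pi.mul_apply, add_apply, smul_apply, coe_innerSL_apply,
    smul_eq_mul, real_inner_comm]
  field_simp
  ring

variable [FiniteDimensional ℝ E]

theorem laplacian_comp_norm (hg : ContDiffAt ℝ 2 g ‖x‖) (hx : x ≠ 0) :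
    Δ (fun y : E => g ‖y‖) x =
      deriv (deriv g) ‖x‖ + (finrank ℝ E - 1) / ‖x‖ * deriv g ‖x‖ := by
  have hr : ‖x‖ ≠ 0 := norm_ne_zero_iff.2 hx
  let b := stdOrthonormalBasis ℝ E
  have hsum : ∑ i, ⟪x, b i⟫ * ⟪x, b i⟫ = ‖x‖ ^ 2 := by
    simpa only [sq] using b.sum_sq_inner_left x
  simp only [InnerProductSpace.laplacian_eq_iteratedFDeriv_orthonormalBasis _ b,
    iteratedFDeriv_two_comp_norm hg hx, Finset.sum_add_distrib, ← Finset.mul_sum,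
    Finset.sum_sub_distrib, ← Finset.sum_div, hsum, real_inner_self_eq_norm_sq, b.norm_eq_one,
    one_pow, Finset.sum_const, Finset.card_univ, Fintype.card_fin, nsmul_eq_mul, mul_one]
  field_simp

theorem laplacian_const_mul_exp_norm (c κ : ℝ) (hx : x ≠ 0) :
    Δ (fun y : E => c * Real.exp (κ * ‖y‖)) x =
      (κ ^ 2 + (finrank ℝ E - 1) * κ / ‖x‖) * (c * Real.exp (κ * ‖x‖)) := by
  have hderiv (d : ℝ) : deriv (fun r => d * Real.exp (κ * r)) =
      fun r => d * κ * Real.exp (κ * r) := by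
    ext r
    have h := (((hasDerivAt_id r).const_mul κ).exp.const_mul d).deriv
    simp only [id, mul_one] at h
    rw [h]
    ring
  rw [laplacian_comp_norm (g := fun r => c * Real.exp (κ * r)) (by fun_prop) hx]
  simp only [hderiv]
  ring

end Radial

section Comparison

variable {E : Type*} [NormedAddCommGroup E] [InnerProductSpace ℝ E] [FiniteDimensional ℝ E]

theorem laplacian_nonneg_of_isLocalMin {f : E → ℝ} {x : E} (hmin : IsLocalMin f x)
    (hf : ContDiffAt ℝ 2 f x) : 0 ≤ Δ f x := by
  rw [InnerProductSpace.laplacian_eq_iteratedFDeriv_stdOrthonormalBasis]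
  exact Finset.sum_nonneg fun i _ => iteratedFDeriv_two_nonneg_of_isLocalMin hmin hf _

theorem nonneg_of_laplacian_neg {u : E → ℝ} {s : Set E} (hs : IsClosed s) (hu : ContinuousOn u s)
    (hu_inf : ∀ c < 0, ∀ᶠ x in cocompact E ⊓ 𝓟 s, c ≤ u x)
    (hu_frontier : ∀ x ∈ frontier s, 0 ≤ u x)
    (hu_smooth : ∀ x ∈ interior s, ContDiffAt ℝ 2 u x)
    (hu_laplacian : ∀ x ∈ interior s, u x < 0 → Δ u x < 0) :
    ∀ x ∈ s, 0 ≤ u x := by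
  by_contra! ⟨z, hzs, hz⟩
  obtain ⟨x, hxs, hmin⟩ := hu.exists_isMinOn' hs hzs (hu_inf _ hz)
  have hx : u x < 0 := (hmin hzs).trans_lt hz
  have hxint : x ∈ interior s := by
    by_contra hxint
    exact hx.not_ge (hu_frontier x ⟨subset_closure hxs, hxint⟩)
  have hloc : IsLocalMin u x := hmin.isLocalMin (mem_interior_iff_mem_nhds.1 hxint)
  exact (hu_laplacian x hxint hx).not_ge
    (laplacian_nonneg_of_isLocalMin hloc (hu_smooth x hxint))

theorem subsolution_le_supersolution {φ ψ : E → ℝ} {s : Set E} {a : ℝ} (ha : 0 ≤ a)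
    (hs : IsClosed s) (hφ_cont : ContinuousOn φ s) (hψ_cont : ContinuousOn ψ s)
    (hφ_lim : Tendsto φ (cocompact E) (𝓝 0)) (hψ_nonneg : ∀ x ∈ s, 0 ≤ ψ x)
    (h_frontier : ∀ x ∈ frontier s, φ x ≤ ψ x)
    (hφ_smooth : ∀ x ∈ interior s, ContDiffAt ℝ 2 φ x)
    (hψ_smooth : ∀ x ∈ interior s, ContDiffAt ℝ 2 ψ x)
    (hφ_sub : ∀ x ∈ interior s, a * φ x < Δ φ x)
    (hψ_super : ∀ x ∈ interior s, Δ ψ x ≤ a * ψ x) :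
    ∀ x ∈ s, φ x ≤ ψ x := by
  suffices h : ∀ x ∈ s, 0 ≤ (ψ - φ) x from fun x hx => sub_nonneg.1 (h x hx)
  refine nonneg_of_laplacian_neg hs (hψ_cont.sub hφ_cont) (fun c hc => ?_)
    (fun x hx => sub_nonneg.2 (h_frontier x hx))
    (fun x hx => (hψ_smooth x hx).sub (hφ_smooth x hx)) (fun x hx hlt => ?_)
  · have hφ_small : ∀ᶠ x in cocompact E ⊓ 𝓟 s, φ x < -c :=
      (hφ_lim.mono_left inf_le_left).eventually_lt_const (neg_pos.2 hc)
    filter_upwards [hφ_small, mem_inf_of_right (mem_principal_self s)] with x hφx hxs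
    simp only [Pi.sub_apply]
    linarith [hψ_nonneg x hxs]
  · have hle : ψ x ≤ φ x := (sub_neg.1 hlt).le
    rw [(hψ_smooth x hx).laplacian_sub (hφ_smooth x hx), sub_neg]
    calc Δ ψ x ≤ a * ψ x := hψ_super x hx
      _ ≤ a * φ x := mul_le_mul_of_nonneg_left hle ha
      _ < Δ φ x := hφ_sub x hx

end Comparison

section ExponentialDecay

theorem tendsto_const_mul_exp_norm_cocompact {E : Type*} [SeminormedAddCommGroup E] [ProperSpace E]
    (c : ℝ) {κ : ℝ} (hκ : κ < 0) :
    Tendsto (fun x : E => c * Real.exp (κ * ‖x‖)) (cocompact E) (𝓝 0) := by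
  have hexponent : Tendsto (fun x : E => κ * ‖x‖) (cocompact E) atBot :=
    tendsto_norm_cocompact_atTop.const_mul_atTop_of_neg hκ
  simpa using (Real.tendsto_exp_atBot.comp hexponent).const_mul c

variable {E : Type*} [NormedAddCommGroup E] [InnerProductSpace ℝ E] [FiniteDimensional ℝ E]

theorem eventually_mul_lt_laplacian_const_mul_exp_norm {a κ : ℝ} (haκ : a < κ ^ 2) :
    ∀ᶠ ρ in atTop, ∀ x : E, ρ ≤ ‖x‖ → ∀ c > 0,
      a * (c * Real.exp (κ * ‖x‖)) < Δ (fun y : E => c * Real.exp (κ * ‖y‖)) x := by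
  have hlim : Tendsto (fun r : ℝ => κ ^ 2 + (finrank ℝ E - 1) * κ / r) atTop (𝓝 (κ ^ 2)) := by
    simpa using (tendsto_const_nhds.div_atTop tendsto_id).const_add (κ ^ 2)
  filter_upwards [eventually_forall_ge_atTop.2 (hlim.eventually_const_lt haκ),
    eventually_gt_atTop 0] with ρ hρ hρ₀ x hx c hc
  rw [laplacian_const_mul_exp_norm c κ (norm_pos_iff.1 (hρ₀.trans_le hx))]
  exact mul_lt_mul_of_pos_right (hρ _ hx) (by positivity)

theorem exponential_lower_bound_general {R a : ℝ} (ha : 0 ≤ a) {ψ : E → ℝ}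
    (hψ_pos : ∀ x, R < ‖x‖ → 0 < ψ x) (hψ_smooth : ∀ x, R < ‖x‖ → ContDiffAt ℝ 2 ψ x)
    (hψ_super : ∀ x, R < ‖x‖ → Δ ψ x ≤ a * ψ x) {A : ℝ} (hA : a < A) :
    ∃ c R' : ℝ, 0 < c ∧ R ≤ R' ∧
      ∀ x : E, R' ≤ ‖x‖ → c * Real.exp (-√A * ‖x‖) ≤ ψ x := by
  have hA₀ : 0 < A := ha.trans_lt hA
  obtain ⟨R', hexp, hR', hR'₀⟩ := ((eventually_mul_lt_laplacian_const_mul_exp_norm (E := E)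
    (a := a) (κ := -√A) (by rwa [neg_sq, Real.sq_sqrt hA₀.le])).and
      ((eventually_gt_atTop R).and (eventually_gt_atTop 0))).exists
  have hcont : ContinuousOn ψ {x | R' ≤ ‖x‖} :=
    fun x hx => (hψ_smooth x (hR'.trans_le hx)).continuousAt.continuousWithinAt
  obtain ⟨m, hm, hmψ⟩ : ∃ m, 0 < m ∧ ∀ x ∈ Metric.sphere (0 : E) R', m ≤ ψ x :=
    (isCompact_sphere 0 R').exists_forall_le'
      (hcont.mono fun x hx => (mem_sphere_zero_iff_norm.1 hx).ge)
      fun x hx => hψ_pos x (by rwa [mem_sphere_zero_iff_norm.1 hx])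
  let c := m * Real.exp (√A * R')
  let φ : E → ℝ := fun x => c * Real.exp (-√A * ‖x‖)
  have hc : 0 < c := by positivity
  have hφ_lim : Tendsto φ (cocompact E) (𝓝 0) :=
    tendsto_const_mul_exp_norm_cocompact c (by simpa using hA₀)
  have hφ_smooth (x : E) (hx : R' ≤ ‖x‖) : ContDiffAt ℝ 2 φ x :=
    contDiffAt_const.mul
      (contDiffAt_const.mul (contDiffAt_norm ℝ (norm_pos_iff.1 (hR'₀.trans_le hx)))).exp
  have h_frontier (x : E) (hx : x ∈ frontier {x : E | R' ≤ ‖x‖}) : φ x ≤ ψ x := by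
    have hxR' : R' = ‖x‖ := frontier_le_subset_eq continuous_const continuous_norm hx
    calc φ x = m := by simp [φ, c, ← hxR', mul_assoc, ← Real.exp_add]
      _ ≤ ψ x := hmψ x (mem_sphere_zero_iff_norm.2 hxR'.symm)
  have hinterior : ∀ x ∈ interior {x : E | R' ≤ ‖x‖}, R' ≤ ‖x‖ := interior_subset
  exact ⟨c, R', hc, hR'.le, subsolution_le_supersolution ha
    (isClosed_le continuous_const continuous_norm) (by fun_prop) hcont hφ_lim
    (fun x hx => (hψ_pos x (hR'.trans_le hx)).le) h_frontier
    (fun x hx => hφ_smooth x (hinterior x hx))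
    (fun x hx => hψ_smooth x (hR'.trans_le (hinterior x hx)))
    (fun x hx => hexp x (hinterior x hx) c hc)
    (fun x hx => hψ_super x (hR'.trans_le (hinterior x hx)))⟩

end ExponentialDecay

theorem laplacian_eq_of_contDiffAt {f : EuclideanSpace ℝ (Fin 3) → ℝ}
    {x : EuclideanSpace ℝ (Fin 3)} (hf : ContDiffAt ℝ 2 f x) : laplacian f x = Δ f x := by
  simp [InnerProductSpace.laplacian_eq_iteratedFDeriv_orthonormalBasis f
    (EuclideanSpace.basisFun (Fin 3) ℝ), iteratedFDeriv_two_eq_fderiv_fderiv_apply hf, laplacian]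

/-- exponential lower bound.  If `ψ` is continuous, positive for `|x| ≥ R`,
tends to `0` at infinity, is `C²` on `{|x| > R}` and satisfies `Δψ ≤ a ψ` there (with
`a ≥ 0`), then for every `A₂ > a` there are `c > 0` and `R' ≥ R` with
`ψ(x) ≥ c e^{-√A₂ |x|}` for `|x| ≥ R'`. -/
theorem exponential_lower_bound
    (R a : ℝ) (hR : 0 < R) (ha : 0 ≤ a)
    (ψ : EuclideanSpace ℝ (Fin 3) → ℝ)
    (hψ_cont : Continuous ψ)
    (hψ_pos : ∀ x : EuclideanSpace ℝ (Fin 3), R ≤ ‖x‖ → 0 < ψ x)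
    (hψ_decay : Tendsto ψ (cocompact (EuclideanSpace ℝ (Fin 3))) (nhds 0))
    (hψ_smooth : ContDiffOn ℝ 2 ψ {x | R < ‖x‖})
    (hψ_super : ∀ x : EuclideanSpace ℝ (Fin 3), R < ‖x‖ → laplacian ψ x ≤ a * ψ x) :
    ∀ A₂ : ℝ, a < A₂ →
      ∃ c R' : ℝ, 0 < c ∧ R ≤ R' ∧
        ∀ x : EuclideanSpace ℝ (Fin 3), R' ≤ ‖x‖ →
          c * Real.exp (-Real.sqrt A₂ * ‖x‖) ≤ ψ x := by
  have hψ_smoothAt (x : EuclideanSpace ℝ (Fin 3)) (hx : R < ‖x‖) : ContDiffAt ℝ 2 ψ x :=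
    hψ_smooth.contDiffAt ((isOpen_lt continuous_const continuous_norm).mem_nhds hx)
  exact fun A₂ => exponential_lower_bound_general ha (fun x hx => hψ_pos x hx.le) hψ_smoothAt
    fun x hx => (laplacian_eq_of_contDiffAt (hψ_smoothAt x hx)).symm.trans_le (hψ_super x hx)
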